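/- Let H be the graph (a symmetric binary relation, loops allowed) with vertex set {u0, u1, w0, w1, w2, v}, whose edges are: the loop at v, the edges u0–u1, w0–w1, w1–w2, and an edge between v and each of u0, u1, w0, w1, w2. Then every partial homomorphism of size two of H into itself extends to a full homomorphism from H into itself. -/

import Mathlib

/-- The vertices of the graph `H`: the walk `u0 – u1`, the walk `w0 – w1 – w2`,
and the reflexive vertex `v`. -/
inductive HVert : Type
  | u0 | u1 | w0 | w1 | w2 | v
deriving DecidableEq

/-- The edge relation of the graph `H` (symmetric, loops allowed): the loop at `v`,
the edges `u0 – u1`, `w0 – w1`, `w1 – w2`, and an edge between `v` and every other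
vertex. -/
def HEdge : HVert → HVert → Prop := fun a b =>
  (a = HVert.v ∧ b = HVert.v) ∨
  (a = HVert.u0 ∧ b = HVert.u1) ∨ (a = HVert.u1 ∧ b = HVert.u0) ∨
  (a = HVert.w0 ∧ b = HVert.w1) ∨ (a = HVert.w1 ∧ b = HVert.w0) ∨
  (a = HVert.w1 ∧ b = HVert.w2) ∨ (a = HVert.w2 ∧ b = HVert.w1) ∨
  (a = HVert.v ∧ b ≠ HVert.v) ∨ (b = HVert.v ∧ a ≠ HVert.v)

theorem hgraph_partial_hom_extends (a b : HVert) (hab : a ≠ b) (a' b' : HVert)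
    (h1 : HEdge a b → HEdge a' b') (h2 : HEdge b a → HEdge b' a') :
    ∃ f : HVert → HVert, f a = a' ∧ f b = b' ∧
      ∀ x y : HVert, x ≠ y → HEdge x y → HEdge (f x) (f y) := by
  have hv : ∀ x, HEdge HVert.v x := by
    intro x; by_cases h : x = HVert.v <;> simp [HEdge, h]
  have hv' : ∀ x, HEdge x HVert.v := by
    intro x; by_cases h : x = HVert.v <;> simp [HEdge, h]
  refine ⟨fun x => if x = a then a' else if x = b then b' else HVert.v, by simp,
    by simp [hab.symm], ?_⟩
  intro x y hxy hE
  dsimp only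
  split_ifs with p q r s t
  all_goals first | exact hv _ | exact hv' _ | skip
  all_goals subst_vars
  all_goals first | exact h1 hE | exact h2 hE | exact absurd rfl hxy
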